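/- Let λ₁ and ν₁ be multiplicative characters of F_q with λ₁²φ = ν₁⁴. Then H(λ₁) = ( A₄(a) + A̅₄(a) ) · Σ_{m=0}^{3} J(ν₁A₄^{m}, φ). -/

import Mathlib

/-!
For `x ≠ 0` the condition `x(j+1)² + a(j-1)²/x = 0` says `(x(j+1))² = -a(j-1)²`. As `-1 = i²` in `F`,
it has no solution when `a` is not a square, and then `A₄(a) + A₄⁻¹(a) = 0` because `A₄(a)² = -1`.
When `a = b²`, the solutions are `x = ±ib(j-1)/(j+1)` with `j ≠ 0, ±1`, and
`x - a/x = ±2ib(j²+1)/(j²-1)`. Since `2i = (1+i)²` and `φ(-1) = 1`, each of them contributes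
`φ(b) ν₁(j⁴) φ(1-j⁴)`, so `H = 2φ(b) ∑ⱼ ν₁(j⁴) φ(1-j⁴)`. The prefactor is `A₄(a) + A₄⁻¹(a)`, and
substituting `y = j²` twice, each time by means of `∑ⱼ g(j²) = ∑_y g(y)(1 + φ(y))`
(`sum_comp_sq`), produces the four Jacobi sums through `(1 + A₄)(1 + A₄²) = ∑ₘ A₄ᵐ`.
-/

open Finset

noncomputable section

variable {F : Type} [Field F] [Fintype F] [DecidableEq F]

/-- Katz's mixed character sum `P(j,k)`; the quadratic character `φ` is `A₄ ^ 2`. -/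
def Pkatz (ψ : AddChar F ℂ) (A₄ : MulChar F ℂ) (a : F) (j k : F) : ℂ :=
  (if j = k then 1 else 0) + (A₄ ^ 2) (-1) * (if j = -k then 1 else 0) +
    (gaussSum (A₄ ^ 2) ψ)⁻¹ *
      ∑ x ∈ univ.filter (fun x : F => x ≠ 0),
        (A₄ ^ 2) (a / x - x) * ψ (x * (j + k) ^ 2 + (a / x) * (j - k) ^ 2)

/-- Katz's sums `V(j)`. -/
def Vkatz (ψ : AddChar F ℂ) (A₄ : MulChar F ℂ) (a : F) (τ : ℂ) (j : F) : ℂ :=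
  if j = 0 then gaussSum A₄ ψ / τ + τ / gaussSum A₄ ψ
  else τ⁻¹ * ∑ x ∈ univ.filter (fun x : F => x ≠ 0), A₄ x * ψ (x + a * j ^ 4 / x)

/-- The finite field hypergeometric function `₂F₁(A,B;C|x)`. -/
def hyp2F1 (A B C : MulChar F ℂ) (x : F) : ℂ :=
  ((1 : MulChar F ℂ) x / (Fintype.card F : ℂ)) *
    ∑ y : F, B y * (B⁻¹ * C) (y - 1) * A⁻¹ (1 - x * y)

/-- The Jacobi sum `J(A,B)`. -/
def Jsum (A B : MulChar F ℂ) : ℂ := ∑ y : F, A y * B (1 - y)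

/-- The sum `h(D,j)`; the quadratic character `φ` is `A₄ ^ 2`. -/
def hKatz (A₄ D : MulChar F ℂ) (j : F) : ℂ :=
  ∑ x ∈ univ.filter (fun x : F => x ≠ 0),
    D x * (A₄ ^ 2) (1 - x) * ((D⁻¹ ^ 2) * A₄ ^ 2) (x * (j + 1) ^ 2 + (j - 1) ^ 2)

/-- The sum `H(λ₁)`; the quadratic character `φ` is `A₄ ^ 2`. -/
def Hkatz (A₄ lam : MulChar F ℂ) (a : F) : ℂ :=
  ∑ p ∈ (univ ×ˢ univ).filter
      (fun p : F × F => p.1 ≠ 0 ∧ p.2 ≠ 0 ∧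
        p.2 * (p.1 + 1) ^ 2 + a * (p.1 - 1) ^ 2 / p.2 = 0),
    (lam ^ 2 * A₄ ^ 2) p.1 * (A₄ ^ 2) (p.2 - a / p.2)

/-- The Mellin transform `S(χ)` of the sums `V(j)`. -/
def Smel (ψ : AddChar F ℂ) (A₄ : MulChar F ℂ) (a : F) (τ : ℂ) (χ : MulChar F ℂ) : ℂ :=
  ∑ j ∈ univ.filter (fun j : F => j ≠ 0), χ j * Vkatz ψ A₄ a τ j

/-- The Mellin transform `T(χ)` of the sums `P(j,0)`. -/
def Tmel (ψ : AddChar F ℂ) (A₄ : MulChar F ℂ) (a : F) (χ : MulChar F ℂ) : ℂ :=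
  ∑ j ∈ univ.filter (fun j : F => j ≠ 0), χ j * Pkatz ψ A₄ a j 0

/-- The double Mellin transform `T(χ₁,χ₂)` of the sums `P(j,k)`. -/
def Tmel2 (ψ : AddChar F ℂ) (A₄ : MulChar F ℂ) (a : F) (χ₁ χ₂ : MulChar F ℂ) : ℂ :=
  ∑ j ∈ univ.filter (fun j : F => j ≠ 0), ∑ k ∈ univ.filter (fun k : F => k ≠ 0),
    χ₁ j * χ₂ k * Pkatz ψ A₄ a j k

end

section Helpers

variable {F : Type} [Field F] [Fintype F] [DecidableEq F]

/-- The square of a character of order 4 is the quadratic character. -/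
lemma sq_eq_quadraticChar (A₄ : MulChar F ℂ) (hA₄ : orderOf A₄ = 4) (y : F) :
    (A₄ ^ 2) y = ((quadraticChar F y : ℤ) : ℂ) := by
  have h4 : A₄ ^ 4 = 1 := hA₄ ▸ pow_orderOf_eq_one A₄
  have h2 : A₄ ^ 2 ≠ 1 := by
    intro h
    have := orderOf_dvd_of_pow_eq_one h
    rw [hA₄] at this
    omega
  have hsq : ∀ z : F, z ≠ 0 → (A₄ ^ 2) (z * z) = 1 := by
    intro z hz
    rw [map_mul, ← MulChar.mul_apply, ← pow_add, h4, MulChar.one_apply hz.isUnit]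
  obtain ⟨g, hg⟩ := MulChar.ne_one_iff.mp h2
  have hg0 : (g : F) ≠ 0 := g.ne_zero
  have hgsq : (A₄ ^ 2) (g : F) * (A₄ ^ 2) (g : F) = 1 := by rw [← map_mul, hsq _ hg0]
  have hgm : (A₄ ^ 2) (g : F) = -1 := (mul_self_eq_one_iff.mp hgsq).resolve_left hg
  have hgn : quadraticChar F (g : F) = -1 := by
    rw [quadraticChar_neg_one_iff_not_isSquare]
    rintro ⟨z, hz⟩
    apply hg
    rw [hz, hsq]
    rintro rfl
    simp at hz
  rcases eq_or_ne y 0 with rfl | hy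
  · simp [MulChar.map_zero]
  · rcases quadraticChar_dichotomy hy with h | h
    · obtain ⟨z, rfl⟩ := (quadraticChar_one_iff_isSquare hy).mp h
      rw [hsq z (left_ne_zero_of_mul hy), h]
      simp
    · have hyg : quadraticChar F (y * g) = 1 := by rw [map_mul, h, hgn]; norm_num
      obtain ⟨z, hz⟩ := (quadraticChar_one_iff_isSquare (mul_ne_zero hy hg0)).mp hyg
      have hz0 : z ≠ 0 := by
        rintro rfl
        simp [hy] at hz
      have := hsq z hz0
      rw [← hz, map_mul, hgm] at this
      rw [h]
      push_cast
      linear_combination -this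

lemma sum_comp_sq (hF : ringChar F ≠ 2) (g : F → ℂ) :
    ∑ j : F, g (j ^ 2) = ∑ y : F, g y * (1 + ((quadraticChar F y : ℤ) : ℂ)) := by
  rw [← Finset.sum_fiberwise (s := Finset.univ) (g := fun j : F => j ^ 2)]
  refine Finset.sum_congr rfl fun y _ => ?_
  rw [Finset.sum_congr rfl (g := fun _ => g y) (by
    intro j hj
    rw [(Finset.mem_filter.mp hj).2])]
  have hc := quadraticChar_card_sqrts hF y
  have hs : {x : F | x ^ 2 = y}.toFinset = Finset.univ.filter (fun x : F => x ^ 2 = y) := by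
    ext x; simp
  rw [hs] at hc
  have hc' : ((Finset.univ.filter (fun x : F => x ^ 2 = y)).card : ℂ)
      = ((quadraticChar F y : ℤ) : ℂ) + 1 := by exact_mod_cast hc
  rw [Finset.sum_const, nsmul_eq_mul, hc']
  ring

lemma sum_comp_fourth (A₄ : MulChar F ℂ) (hA₄ : orderOf A₄ = 4) (hF : ringChar F ≠ 2)
    (ν : MulChar F ℂ) :
    ∑ j : F, ν (j ^ 4) * (A₄ ^ 2) (1 - j ^ 4) =
      ∑ m ∈ Finset.range 4, Jsum (ν * A₄ ^ m) (A₄ ^ 2) := by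
  have hsq : ∀ u : F, A₄ (u ^ 2) = (A₄ ^ 2) u := by
    intro u
    rw [map_pow, MulChar.pow_apply' _ two_ne_zero]
  calc ∑ j : F, ν (j ^ 4) * (A₄ ^ 2) (1 - j ^ 4)
      = ∑ j : F, (fun u : F => ν (u ^ 2) * (A₄ ^ 2) (1 - u ^ 2)) (j ^ 2) := by
        refine Finset.sum_congr rfl fun j _ => ?_
        simp only [← pow_mul]
    _ = ∑ u : F, (fun y : F => ν y * (A₄ ^ 2) (1 - y) * (1 + A₄ y)) (u ^ 2) := by
        rw [sum_comp_sq hF (fun u : F => ν (u ^ 2) * (A₄ ^ 2) (1 - u ^ 2))]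
        refine Finset.sum_congr rfl fun u _ => ?_
        simp only [hsq, sq_eq_quadraticChar A₄ hA₄ u]
    _ = ∑ y : F, ∑ m ∈ Finset.range 4, (ν * A₄ ^ m) y * (A₄ ^ 2) (1 - y) := by
        rw [sum_comp_sq hF (fun y : F => ν y * (A₄ ^ 2) (1 - y) * (1 + A₄ y))]
        refine Finset.sum_congr rfl fun y _ => ?_
        rw [← sq_eq_quadraticChar A₄ hA₄ y]
        rcases eq_or_ne y 0 with rfl | hy
        · simp [MulChar.map_zero]
        · simp only [Finset.sum_range_succ, Finset.sum_range_zero, MulChar.mul_apply, pow_succ,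
            pow_zero, MulChar.one_apply hy.isUnit]
          ring
    _ = _ := by
        rw [Finset.sum_comm]
        rfl

/-- The inner sum over `x`, for fixed `j`, when `a = b²`. -/
lemma fixed_j_sum (hF : (2 : F) ≠ 0) (φ : MulChar F ℂ)
    (hφ : ∀ z : F, z ≠ 0 → φ (z ^ 2) = 1) (i : F) (hi : i ^ 2 = -1) (b : F) (hb : b ≠ 0)
    (ν : MulChar F ℂ) (j : F) :
    ∑ x : F, (if j ≠ 0 ∧ x ≠ 0 ∧ x * (j + 1) ^ 2 + b ^ 2 * (j - 1) ^ 2 / x = 0 then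
        (ν ^ 4) j * φ (x - b ^ 2 / x) else 0) = 2 * φ b * (ν (j ^ 4) * φ (1 - j ^ 4)) := by
  have hi0 : i ≠ 0 := by
    rintro rfl
    norm_num at hi
  rcases eq_or_ne j 0 with rfl | hj
  · simp [MulChar.map_zero]
  have h1 : ∀ s : F, s ^ 2 = 1 → j = s →
      ∑ x : F, (if j ≠ 0 ∧ x ≠ 0 ∧ x * (j + 1) ^ 2 + b ^ 2 * (j - 1) ^ 2 / x = 0 then
        (ν ^ 4) j * φ (x - b ^ 2 / x) else 0) = 2 * φ b * (ν (j ^ 4) * φ (1 - j ^ 4)) := by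
    intro s hs hjs
    have hj4 : 1 - j ^ 4 = 0 := by rw [hjs]; linear_combination (-s ^ 2 - 1) * hs
    rw [hj4, MulChar.map_zero, mul_zero, mul_zero]
    refine Finset.sum_eq_zero fun x _ => if_neg ?_
    rintro ⟨-, hx, he⟩
    rw [hjs] at he
    have hss : (s - 1) * (s + 1) = 0 := by linear_combination hs
    rcases mul_eq_zero.mp hss with h | h
    · have : s = 1 := by linear_combination h
      subst this
      have h2 : x * 2 ^ 2 = 0 := by
        linear_combination he
      exact mul_ne_zero hx (pow_ne_zero 2 hF) h2
    · have : s = -1 := by linear_combination h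
      subst this
      have h2 : b ^ 2 * 2 ^ 2 / x = 0 := by
        rw [← he]
        ring
      exact div_ne_zero (mul_ne_zero (pow_ne_zero 2 hb) (pow_ne_zero 2 hF)) hx h2
  by_cases hj1 : j = 1
  · exact h1 1 (by ring) hj1
  by_cases hj2 : j = -1
  · exact h1 (-1) (by ring) hj2
  clear h1
  have hm : j - 1 ≠ 0 := sub_ne_zero.mpr hj1
  have hp : j + 1 ≠ 0 := fun h => hj2 (by linear_combination h)
  set c : F := i * b * (j - 1) / (j + 1) with hc
  have hc0 : c ≠ 0 := div_ne_zero (mul_ne_zero (mul_ne_zero hi0 hb) hm) hp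
  have hcc : c ≠ -c := by
    intro h
    have : 2 * c = 0 := by linear_combination h
    exact mul_ne_zero hF hc0 this
  have hcj : c * (j + 1) = i * b * (j - 1) := by
    rw [hc]
    field_simp
  have hcond : ∀ x : F, (j ≠ 0 ∧ x ≠ 0 ∧ x * (j + 1) ^ 2 + b ^ 2 * (j - 1) ^ 2 / x = 0) ↔
      x ∈ ({c, -c} : Finset F) := by
    intro x
    rw [Finset.mem_insert, Finset.mem_singleton]
    have key : ∀ x : F, x ≠ 0 → (x * (j + 1) ^ 2 + b ^ 2 * (j - 1) ^ 2 / x = 0 ↔ x ^ 2 = c ^ 2) := by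
      intro x hx
      have e1 : x * (j + 1) ^ 2 + b ^ 2 * (j - 1) ^ 2 / x = (j + 1) ^ 2 * (x ^ 2 - c ^ 2) / x := by
        field_simp
        linear_combination (c * (j + 1) + i * b * (j - 1)) * hcj + (b ^ 2 * (j - 1) ^ 2) * hi
      rw [e1, div_eq_zero_iff, mul_eq_zero, or_iff_left hx, or_iff_right (pow_ne_zero 2 hp),
        sub_eq_zero]
    constructor
    · rintro ⟨-, hx, he⟩
      exact sq_eq_sq_iff_eq_or_eq_neg.mp ((key x hx).mp he)
    · intro hx
      have hx0 : x ≠ 0 := by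
        rcases hx with rfl | rfl
        · exact hc0
        · exact neg_ne_zero.mpr hc0
      exact ⟨hj, hx0, (key x hx0).mpr (sq_eq_sq_iff_eq_or_eq_neg.mpr hx)⟩
  simp only [hcond]
  rw [Finset.sum_ite_mem, Finset.univ_inter, Finset.sum_pair hcc]
  have hneg : φ (-1) = 1 := by rw [← hi, hφ i hi0]
  have hphi : φ (c - b ^ 2 / c) = φ b * φ (1 - j ^ 4) := by
    have hi1 : 1 + i ≠ 0 := by
      intro h
      apply hF
      linear_combination hi - (i - 1) * h
    have hjj : j ^ 2 - 1 ≠ 0 := by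
      have := mul_ne_zero hm hp
      intro h
      exact this (by linear_combination h)
    -- `x - a/x = 2ib(j²+1)/(j²-1)`, with `2i`, `-1` and `(j²-1)²` gathered into one square,
    -- which `φ` ignores
    have e : c - b ^ 2 / c = b * (1 - j ^ 4) * (((1 + i) * i * (j ^ 2 - 1)⁻¹) ^ 2) := by
      have e2 : b ^ 2 / c = -(i * b * (j + 1) / (j - 1)) := by
        rw [div_eq_iff hc0, hc]
        field_simp
        linear_combination hi
      have hjf : j ^ 2 - 1 = (j - 1) * (j + 1) := by ring
      have hw : ((1 + i) * i) ^ 2 = -2 * i := by linear_combination (i ^ 2 + 2 * i) * hi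
      rw [mul_pow, hw, e2, hc, hjf]
      field_simp
      ring
    rw [e, map_mul, map_mul, hφ _ (mul_ne_zero (mul_ne_zero hi1 hi0) (inv_ne_zero hjj)), mul_one]
  have hphi' : φ (-c - b ^ 2 / (-c)) = φ b * φ (1 - j ^ 4) := by
    rw [← hphi, show -c - b ^ 2 / (-c) = -1 * (c - b ^ 2 / c) by rw [div_neg]; ring, map_mul,
      hneg, one_mul]
  rw [hphi, hphi', MulChar.pow_apply' _ (by norm_num), map_pow]
  ring

end Helpers

/-- Evaluation of `H(λ₁)` when `λ₁²φ = ν₁⁴`. -/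
theorem H_eval_fourth_power
    (F : Type) [Field F] [Fintype F] [DecidableEq F]
    (hq : Fintype.card F % 4 = 1)
    (A₄ : MulChar F ℂ) (hA₄ : orderOf A₄ = 4)
    (a : F) (ha : a ≠ 0)
    (lam ν₁ : MulChar F ℂ) (h : lam ^ 2 * A₄ ^ 2 = ν₁ ^ 4) :
    Hkatz A₄ lam a =
      (A₄ a + A₄⁻¹ a) * ∑ m ∈ Finset.range 4, Jsum (ν₁ * A₄ ^ m) (A₄ ^ 2) := by
  have hF : ringChar F ≠ 2 := fun h2 => by
    have := FiniteField.even_card_of_char_two h2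
    omega
  have h20 : (2 : F) ≠ 0 := Ring.two_ne_zero hF
  have h4 : A₄ ^ 4 = 1 := hA₄ ▸ pow_orderOf_eq_one A₄
  have hinv : A₄⁻¹ = A₄ ^ 3 := inv_eq_of_mul_eq_one_right (by rw [← pow_succ', h4])
  obtain ⟨i, hi⟩ := FiniteField.isSquare_neg_one_iff.mpr (show Fintype.card F % 4 ≠ 3 by omega)
  have hi2 : i ^ 2 = -1 := by rw [hi]; ring
  have hφ : ∀ z : F, z ≠ 0 → (A₄ ^ 2) (z ^ 2) = 1 := by
    intro z hz
    rw [sq_eq_quadraticChar A₄ hA₄, quadraticChar_sq_one' hz]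
    norm_num
  unfold Hkatz
  rw [h, hinv]
  by_cases hsq : IsSquare a
  · obtain ⟨b, hb⟩ := hsq
    have hb2 : a = b ^ 2 := by rw [hb]; ring
    have hb0 : b ≠ 0 := by
      rintro rfl
      simp at hb
      exact ha hb
    subst hb2
    rw [Finset.sum_filter, Finset.sum_product]
    simp only [fixed_j_sum h20 (A₄ ^ 2) hφ i hi2 b hb0 ν₁]
    rw [← Finset.mul_sum, sum_comp_fourth A₄ hA₄ hF]
    congr 1
    have hA : A₄ (b ^ 2) = (A₄ ^ 2) b := by rw [map_pow, MulChar.pow_apply' _ two_ne_zero]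
    have h3 : (A₄ ^ 3) (b ^ 2) = (A₄ ^ 2) b := by
      rw [pow_succ, MulChar.mul_apply, hφ b hb0, one_mul, hA]
    rw [hA, h3]
    ring
  · have hm : (A₄ ^ 2) a = -1 := by
      rw [sq_eq_quadraticChar A₄ hA₄, quadraticChar_neg_one_iff_not_isSquare.mpr hsq]
      norm_num
    have h3 : (A₄ ^ 3) a = - A₄ a := by
      rw [pow_succ, MulChar.mul_apply, hm]
      ring
    rw [h3, add_neg_cancel, zero_mul]
    refine Finset.sum_eq_zero fun p hp => ?_
    exfalso
    obtain ⟨-, hj, hx, he⟩ := Finset.mem_filter.mp hp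
    obtain ⟨j, x⟩ := p
    simp only at hj hx he
    have he' : x ^ 2 * (j + 1) ^ 2 + a * (j - 1) ^ 2 = 0 := by
      have : x * (x * (j + 1) ^ 2 + a * (j - 1) ^ 2 / x) = 0 := by rw [he, mul_zero]
      rw [← this]
      field_simp
    rcases eq_or_ne j 1 with rfl | hj1
    · have h2 : (x * 2) ^ 2 = 0 := by linear_combination he'
      exact pow_ne_zero 2 (mul_ne_zero hx h20) h2
    · apply hsq
      have hm1 : j - 1 ≠ 0 := sub_ne_zero.mpr hj1
      refine ⟨i * x * (j + 1) / (j - 1), ?_⟩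
      field_simp
      linear_combination he' - x ^ 2 * (j + 1) ^ 2 * hi2
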